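/- Let H = ℓ²(ℤ, ℂ) with standard orthonormal basis (e_k)_{k∈ℤ}, P the projection with (P f)(k) = f(k) for k > 0 and 0 otherwise, and S^m the bilateral shift S^m e_k = e_{k+m}. Set Ω(S^m,S^n) := (S^m∘P)∘(S^n∘P) − (S^n∘P)∘(S^m∘P). Then HasSum (fun k => ⟨Ω(S^{-2},S^{2})(Ω(S^{-3},S^{3}) e_k), e_k⟩) (2 : ℂ); that is, the trace of Ω(z^{-2},z^{2})·Ω(z^{-3},z^{3}) equals 2. -/

import Mathlib

/-!
For `n ≥ 0` the operator `Ω(S^{-n}, S^n)` is diagonal in the standard basis: on `e k` with `k > 0`,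
raising by `n` and then lowering is the identity, while lowering first and then raising is the
identity exactly when `k > n`. Hence `Ω(S^{-n}, S^n)` is the projection onto the span of
`e 1, …, e n` (`omega_apply_e`), the product for `n = 2, 3` is the projection onto the span of
`e 1, e 2`, and its trace is `2`.
-/

open scoped InnerProductSpace

/-- The Hilbert space `H = ℓ²(ℤ, ℂ)`. -/
noncomputable abbrev H : Type := lp (fun _ : ℤ => ℂ) 2

/-- The standard orthonormal basis vector `e k` of `ℓ²(ℤ, ℂ)`. -/
noncomputable def e (k : ℤ) : H := lp.single 2 k (1 : ℂ)

/-- A bounded operator has finite rank iff its range is a finite-dimensional subspace. -/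
def FiniteRank (T : H →L[ℂ] H) : Prop :=
  FiniteDimensional ℂ (LinearMap.range (T : H →ₗ[ℂ] H))

theorem P_apply_e (P : H →L[ℂ] H)
    (hP : ∀ (f : H) (k : ℤ), P f k = if 0 < k then f k else 0) (k : ℤ) :
    P (e k) = if 0 < k then e k else 0 := by
  ext j
  rw [hP]
  by_cases hj : j = k
  · subst hj
    split_ifs <;> simp
  · have h : (e k : H) j = 0 := by simp [e, lp.single_apply, hj]
    split_ifs <;> simp [h]

/-- On basis vectors, `Ω(S^{-n}, S^n)` acts as the projection onto the span of `e 1, …, e n`. -/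
theorem omega_apply_e (P : H →L[ℂ] H) (S : ℤ → H →L[ℂ] H)
    (hP : ∀ (f : H) (k : ℤ), P f k = if 0 < k then f k else 0)
    (hS : ∀ (m k : ℤ), S m (e k) = e (k + m)) (n : ℤ) (hn : 0 ≤ n) (k : ℤ) :
    ((S (-n) ∘L P) ∘L (S n ∘L P) - (S n ∘L P) ∘L (S (-n) ∘L P)) (e k)
      = if 0 < k ∧ k ≤ n then e k else 0 := by
  simp only [sub_apply, ContinuousLinearMap.comp_apply, P_apply_e P hP]
  by_cases h0 : 0 < k
  · have h1 : 0 < k + n := by omega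
    by_cases h2 : k ≤ n
    · have h3 : ¬ n < k := by omega
      simp [h0, h1, h2, h3, hS, P_apply_e P hP]
    · have h3 : n < k := by omega
      simp [h0, h1, h2, h3, hS, P_apply_e P hP]
  · simp [h0]

theorem inner_e_self (k : ℤ) : ⟪e k, e k⟫_ℂ = 1 := by
  simp [e]

/-- The trace of `Ω(S^{-2},S^{2}) ∘ Ω(S^{-3},S^{3})`, computed as the sum of the
diagonal entries in the standard orthonormal basis, equals `2`. Here
`Ω(S^m,S^n) = [S^m∘P, S^n∘P]`. -/
theorem trace_omega_sq_eq_two (P : H →L[ℂ] H) (S : ℤ → H →L[ℂ] H)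
    (hP : ∀ (f : H) (k : ℤ), P f k = if 0 < k then f k else 0)
    (hS : ∀ (m k : ℤ), S m (e k) = e (k + m)) :
    HasSum
      (fun k : ℤ =>
        ⟪((S (-2) ∘L P) ∘L (S 2 ∘L P) - (S 2 ∘L P) ∘L (S (-2) ∘L P))
            (((S (-3) ∘L P) ∘L (S 3 ∘L P) - (S 3 ∘L P) ∘L (S (-3) ∘L P)) (e k)),
          e k⟫_ℂ)
      (2 : ℂ) := by
  have key : ∀ k ∉ ({1, 2} : Finset ℤ), ¬ (0 < k ∧ k ≤ 2) := by
    intro k hk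
    simp only [Finset.mem_insert, Finset.mem_singleton] at hk
    omega
  have h2 := omega_apply_e P S hP hS 2 (by norm_num)
  have h3 := omega_apply_e P S hP hS 3 (by norm_num)
  have hsum := hasSum_sum_of_ne_finset_zero (L := SummationFilter.unconditional ℤ) (f := fun k : ℤ =>
    ⟪((S (-2) ∘L P) ∘L (S 2 ∘L P) - (S 2 ∘L P) ∘L (S (-2) ∘L P))
      (((S (-3) ∘L P) ∘L (S 3 ∘L P) - (S 3 ∘L P) ∘L (S (-3) ∘L P)) (e k)), e k⟫_ℂ)
    (s := {1, 2}) (by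
      intro k hk
      have hk' := key k hk
      simp only [h3]
      split_ifs
      · rw [h2, if_neg hk', inner_zero_left]
      · rw [map_zero, inner_zero_left])
  convert hsum using 1
  rw [Finset.sum_pair (by norm_num)]
  rw [h3 1, h3 2, if_pos (by norm_num), if_pos (by norm_num), h2 1, h2 2, if_pos (by norm_num),
    if_pos (by norm_num), inner_e_self, inner_e_self]
  norm_num
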